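/- arXiv:0806.3169 — 5 statements merged into one kernel-verified Lean document; each statement's English description precedes it below -/
import Mathlib

section
/- Let V be a finite-dimensional complex vector space of dimension n, let ω be a skew-symmetric bilinear form on V, and let a : V → V be a linear endomorphism that is ω-self-adjoint, i.e. ω(a u, v) = ω(u, a v) for all u, v ∈ V. Suppose ρ ∈ ℂ is an eigenvalue of a whose geometric multiplicity equals 1, i.e. dim ker(a − ρ·id) = 1. Then every vector v in the generalized eigenspace of a at ρ, i.e. every v with (a − ρ·id)ⁿ v = 0, satisfies ω(v, w) = 0 for all w ∈ V. -/
/-!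
Put `N = a - ρ`; it is `ω`-self-adjoint and, since `ker N` is a line, its range is a hyperplane.
By induction on `k`, `ker (N ^ k)` lies in the radical of `ω`. If `N ^ (k + 1) v = 0` and `v ≠ 0`,
then `ω (v, N w) = ω (N v, w) = 0` by induction, so `ω (v, ·)` kills the hyperplane `range N`.
Since `v` is a nonzero generalized eigenvector, it is not in `range (N ^ n)`, so `v = N ^ j u` for
some `j` and some `u ∉ range N`. Self-adjointness of `N ^ j` and skew-symmetry give
`ω (v, u) = ω (N ^ j u, u) = 0`. As `range N` and `u` span the space, `ω (v, ·) = 0`.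
-/

/-- A nonzero vector killed by a power of `N` lies on a chain `v = N ^ j u` that cannot be extended
further back. -/
lemma exists_pow_apply_eq_notMem_range {K V : Type*} [Field K] [AddCommGroup V] [Module K V]
    [FiniteDimensional K V] (N : Module.End K V) {k : ℕ} {v : V} (hv : (N ^ k) v = 0)
    (h0 : v ≠ 0) : ∃ (j : ℕ) (u : V), (N ^ j) u = v ∧ u ∉ LinearMap.range N := by
  have hex : ∃ j : ℕ, v ∉ LinearMap.range (N ^ j) := by
    -- The kernels of the powers of `N` are constant from exponent `finrank K V` on.
    refine ⟨Module.finrank K V, ?_⟩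
    rintro ⟨u, rfl⟩
    apply h0
    have hu : u ∈ LinearMap.ker (N ^ (k + Module.finrank K V)) := by
      rw [LinearMap.mem_ker, pow_add]
      exact hv
    rw [Module.End.ker_pow_eq_ker_pow_finrank_of_le (Nat.le_add_left _ _)] at hu
    exact hu
  classical
  obtain ⟨j, hj⟩ : ∃ j, Nat.find hex = j + 1 := by
    refine Nat.exists_eq_succ_of_ne_zero fun h => ?_
    have := Nat.find_spec hex
    rw [h] at this
    exact this ⟨v, by simp⟩
  have h1 : v ∉ LinearMap.range (N ^ (j + 1)) := hj ▸ Nat.find_spec hex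
  obtain ⟨u, hu⟩ : v ∈ LinearMap.range (N ^ j) := not_not.mp (Nat.find_min hex (by omega))
  refine ⟨j, u, hu, ?_⟩
  rintro ⟨x, rfl⟩
  exact h1 ⟨x, by rw [pow_succ]; exact hu⟩

lemma range_sup_span_eq_top {K V : Type*} [Field K] [AddCommGroup V] [Module K V]
    [FiniteDimensional K V] (N : Module.End K V)
    (hN : Module.finrank K (LinearMap.ker N) = 1) {u : V} (hu : u ∉ LinearMap.range N) :
    LinearMap.range N ⊔ Submodule.span K {u} = ⊤ := by
  have hlt : LinearMap.range N < LinearMap.range N ⊔ Submodule.span K {u} := by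
    refine lt_of_le_of_ne le_sup_left fun h => hu ?_
    rw [h]
    exact Submodule.mem_sup_right (Submodule.mem_span_singleton_self u)
  have h1 := Submodule.finrank_lt_finrank_of_lt hlt
  have h2 := LinearMap.finrank_range_add_finrank_ker N
  have h3 := Submodule.finrank_le (LinearMap.range N ⊔ Submodule.span K {u})
  exact Submodule.eq_top_of_finrank_eq (by omega)

/-- Lemma 6: if `a` is self-adjoint with respect to a skew-symmetric bilinear form `ω`
on a finite-dimensional complex vector space, and `ρ` is an eigenvalue of `a` with
geometric multiplicity 1, then every vector of the generalized eigenspace of `ρ`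
lies in the kernel of `ω`. -/
theorem stmt_1 {V : Type*} [AddCommGroup V] [Module ℂ V] [FiniteDimensional ℂ V]
    (ω : V →ₗ[ℂ] V →ₗ[ℂ] ℂ) (hskew : ∀ u v, ω u v = - ω v u)
    (a : V →ₗ[ℂ] V) (hsa : ∀ u v, ω (a u) v = ω u (a v))
    (ρ : ℂ)
    (hmult : Module.finrank ℂ (LinearMap.ker (a - ρ • (LinearMap.id : V →ₗ[ℂ] V))) = 1)
    (v : V)
    (hv : ((a - ρ • (LinearMap.id : V →ₗ[ℂ] V)) ^ (Module.finrank ℂ V)) v = 0) :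
    ∀ w, ω v w = 0 := by
  have hN : ∀ u w, ω ((a - ρ • (LinearMap.id : V →ₗ[ℂ] V)) u) w =
      ω u ((a - ρ • (LinearMap.id : V →ₗ[ℂ] V)) w) := by
    intro u w
    simp [hsa]
  generalize a - ρ • (LinearMap.id : V →ₗ[ℂ] V) = N at hmult hv hN
  have hpow : ∀ (j : ℕ) (u w : V), ω ((N ^ j) u) w = ω u ((N ^ j) w) := by
    intro j
    induction j with
    | zero => simp
    | succ j ih =>
      intro u w
      rw [pow_succ, Module.End.mul_apply, ih, hN, ← Module.End.mul_apply, ← pow_succ', pow_succ]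
  generalize Module.finrank ℂ V = k at hv
  induction k generalizing v with
  | zero =>
    intro w
    have h0 : v = 0 := by simpa using hv
    simp [h0]
  | succ k ih =>
    rcases eq_or_ne v 0 with rfl | h0
    · simp
    obtain ⟨j, u, hju, hu⟩ := exists_pow_apply_eq_notMem_range N hv h0
    have hvu : ω v u = 0 := by
      have h := hpow j u u
      rw [hskew u, hju] at h
      exact self_eq_neg.mp h
    have hNv : ∀ w, ω (N v) w = 0 := ih (N v) (by rwa [pow_succ] at hv)
    have hle : LinearMap.range N ⊔ Submodule.span ℂ {u} ≤ LinearMap.ker (ω v) := by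
      refine sup_le ?_ ?_
      · rintro _ ⟨x, rfl⟩
        rw [LinearMap.mem_ker, ← hN, hNv]
      · simpa [Submodule.span_le] using hvu
    rw [range_sup_span_eq_top N hmult hu] at hle
    exact fun w => hle Submodule.mem_top
end

section
/- Let V be a finite-dimensional real vector space of dimension n ≥ 1, let g be a nondegenerate symmetric bilinear form on V, let a : V → V be a g-self-adjoint endomorphism (g(a u, w) = g(u, a w) for all u, w), and let Z : V × V × V × V → ℝ be a multilinear map that is skew-symmetric in its first two arguments and satisfies Z(a u, v, x, y) + Z(a v, u, x, y) = 0 for all u, v, x, y ∈ V. Suppose the complexification of a has a (possibly complex) eigenvalue ρ whose geometric multiplicity equals 1 (the kernel of a_ℂ − ρ·id in V ⊗ ℂ is one-dimensional). Then there exists a vector v ∈ V with g(v, v) ≠ 0 such that Z(v, x, y, z) = 0 for all x, y, z ∈ V. -/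
/-!
For each fixed `x, y` the form `B = Z(·, ·, x, y)` is alternating and `a` is `B`-self-adjoint.
Complexify and put `N = a_ℂ - ρ`, which is self-adjoint for both `B_ℂ` and `g_ℂ`. For large `n`,
Fitting's lemma splits `V_ℂ = ker N ^ n ⊕ range N ^ n`, and the summands are orthogonal for every
form with respect to which `N` is self-adjoint.

Since `ker N` is a line, `range N` has codimension one, so `V_ℂ = ℂ u + range N`, where `u` may be
taken in `ker N ^ n`. Iterating, `V_ℂ = ℂ[N] u + range N ^ n`. As `B_ℂ (N ^ i u, N ^ j u) = 0` by
skewness, `ker N ^ n` lies in the kernel of `B_ℂ` (`skew_form_eq_zero`). Hence the real and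
imaginary parts of every vector in `ker N ^ n` lie in the kernel `K` of `Z`. If all `v ∈ K` were
`g`-isotropic, then `g` would vanish on `K` by polarization, hence `g_ℂ` on `ker N ^ n`. An
eigenvector for `ρ` would then be `g_ℂ`-orthogonal to both summands, contradicting nondegeneracy.
-/

open scoped TensorProduct

section SelfAdjoint

variable {k E : Type*} [Field k] [AddCommGroup E] [Module k E]

theorem selfAdjoint_pow {N : E →ₗ[k] E} {B : E →ₗ[k] E →ₗ[k] k}
    (hN : ∀ u w, B (N u) w = B u (N w)) (n : ℕ) (u w : E) :
    B ((N ^ n) u) w = B u ((N ^ n) w) := by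
  induction n generalizing u w with
  | zero => simp
  | succ n ih => rw [pow_succ, Module.End.mul_apply, ih, hN, ← Module.End.mul_apply, ← pow_succ',
      ← pow_succ]

/-- If `E = k u + range N`, then `E = k[N] u + range N ^ n` for every `n`. -/
theorem exists_mem_cyclic_add_pow {N : E →ₗ[k] E} {u : E}
    (hu : ∀ w, ∃ (c : k) (z : E), w = c • u + N z) (n : ℕ) (w : E) :
    ∃ q ∈ Submodule.span k (Set.range fun i : ℕ => (N ^ i) u), ∃ z, w = q + (N ^ n) z := by
  induction n with
  | zero => exact ⟨0, Submodule.zero_mem _, w, by simp⟩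
  | succ n ih =>
    obtain ⟨q, hq, z, rfl⟩ := ih
    obtain ⟨c, z', rfl⟩ := hu z
    refine ⟨q + c • (N ^ n) u, Submodule.add_mem _ hq
      (Submodule.smul_mem _ _ (Submodule.subset_span ⟨n, rfl⟩)), z', ?_⟩
    rw [map_add, map_smul, pow_succ, Module.End.mul_apply, add_assoc]

/-- An endomorphism of a finite-dimensional space whose kernel is a line has a range of
codimension one. -/
theorem exists_cokernel_generator [FiniteDimensional k E] {N : E →ₗ[k] E}
    (h1 : Module.finrank k (LinearMap.ker N) = 1) :
    ∃ u : E, ∀ w, ∃ (c : k) (z : E), w = c • u + N z := by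
  have hq : Module.finrank k (E ⧸ LinearMap.range N) = 1 := by
    have h2 := LinearMap.finrank_range_add_finrank_ker N
    have h3 := Submodule.finrank_quotient_add_finrank (LinearMap.range N)
    omega
  obtain ⟨ū, -, hū⟩ := finrank_eq_one_iff'.mp hq
  obtain ⟨u, rfl⟩ := Submodule.Quotient.mk_surjective _ ū
  refine ⟨u, fun w => ?_⟩
  obtain ⟨c, hc⟩ := hū (Submodule.Quotient.mk w)
  rw [← Submodule.Quotient.mk_smul, eq_comm, Submodule.Quotient.eq] at hc
  obtain ⟨z, hz⟩ := hc
  exact ⟨c, z, by rw [hz]; abel⟩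

/-- The heart of the proof: if `ker N` is a line, the Fitting null component of `N` lies in the
kernel of every skew form for which `N` is self-adjoint. -/
theorem skew_form_eq_zero [CharZero k] [FiniteDimensional k E] {N : E →ₗ[k] E}
    (h1 : Module.finrank k (LinearMap.ker N) = 1) {n : ℕ} (hn : n ≠ 0)
    (hc : IsCompl (LinearMap.ker (N ^ n)) (LinearMap.range (N ^ n)))
    {B : E →ₗ[k] E →ₗ[k] k} (hN : ∀ u w, B (N u) w = B u (N w))
    (hB : ∀ u w, B u w = - B w u) {w : E} (hw : (N ^ n) w = 0) (w' : E) : B w w' = 0 := by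
  obtain ⟨u, hun, hu⟩ : ∃ u : E, (N ^ n) u = 0 ∧ ∀ w, ∃ (c : k) (z : E), w = c • u + N z := by
    obtain ⟨u, hu⟩ := exists_cokernel_generator h1
    have hmem : u ∈ LinearMap.ker (N ^ n) ⊔ LinearMap.range (N ^ n) := by
      rw [hc.sup_eq_top]; trivial
    obtain ⟨u₀, h0, _, ⟨z₁, rfl⟩, rfl⟩ := Submodule.mem_sup.mp hmem
    refine ⟨u₀, h0, fun w => ?_⟩
    obtain ⟨c, z, rfl⟩ := hu w
    obtain ⟨m, rfl⟩ := Nat.exists_eq_succ_of_ne_zero hn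
    refine ⟨c, c • (N ^ m) z₁ + z, ?_⟩
    rw [Nat.succ_eq_add_one, pow_succ', Module.End.mul_apply, map_add, map_smul, smul_add,
      add_assoc]
  have hpow : ∀ i j : ℕ, B ((N ^ i) u) ((N ^ j) u) = 0 := by
    intro i j
    have e1 : B ((N ^ i) u) ((N ^ j) u) = B u ((N ^ (i + j)) u) := by
      rw [selfAdjoint_pow hN, pow_add, Module.End.mul_apply]
    have e2 := hB u ((N ^ (i + j)) u)
    rw [selfAdjoint_pow hN] at e2
    rw [e1]
    exact self_eq_neg.mp e2
  have hspan : ∀ q ∈ Submodule.span k (Set.range fun i : ℕ => (N ^ i) u),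
      ∀ q' ∈ Submodule.span k (Set.range fun i : ℕ => (N ^ i) u), B q q' = 0 := by
    intro q hq q' hq'
    induction hq, hq' using Submodule.span_induction₂ with
    | mem_mem x y hx hy =>
      obtain ⟨i, rfl⟩ := hx
      obtain ⟨j, rfl⟩ := hy
      exact hpow i j
    | zero_left => simp
    | zero_right => simp
    | add_left _ _ _ _ _ _ h h' => simp [h, h']
    | add_right _ _ _ _ _ _ h h' => simp [h, h']
    | smul_left _ _ _ _ _ h => simp [h]
    | smul_right _ _ _ _ _ h => simp [h]
  have hkill : ∀ q ∈ Submodule.span k (Set.range fun i : ℕ => (N ^ i) u), (N ^ n) q = 0 := by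
    intro q hq
    induction hq using Submodule.span_induction with
    | mem x hx =>
      obtain ⟨i, rfl⟩ := hx
      change (N ^ n) ((N ^ i) u) = 0
      rw [← Module.End.mul_apply, ← pow_add, add_comm, pow_add, Module.End.mul_apply, hun, map_zero]
    | zero => simp
    | add _ _ _ _ h h' => simp [h, h']
    | smul _ _ _ h => simp [h]
  obtain ⟨q, hq, z, rfl⟩ := exists_mem_cyclic_add_pow hu n w
  obtain ⟨q', hq', z', rfl⟩ := exists_mem_cyclic_add_pow hu n w'
  rw [map_add, ← selfAdjoint_pow hN, hw, map_zero, LinearMap.zero_apply, add_zero, map_add,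
    LinearMap.add_apply, hspan q hq q' hq', selfAdjoint_pow hN, hkill q' hq', map_zero, add_zero]

end SelfAdjoint

section Complexification

variable {V : Type*} [AddCommGroup V] [Module ℝ V]

theorem exists_re_im (w : ℂ ⊗[ℝ] V) :
    ∃ x y : V, w = (1 : ℂ) ⊗ₜ[ℝ] x + Complex.I ⊗ₜ[ℝ] y := by
  induction w with
  | zero => exact ⟨0, 0, by simp⟩
  | add w w' h h' =>
    obtain ⟨x, y, rfl⟩ := h
    obtain ⟨x', y', rfl⟩ := h'
    exact ⟨x + x', y + y', by rw [TensorProduct.tmul_add, TensorProduct.tmul_add]; abel⟩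
  | tmul c v =>
    refine ⟨c.re • v, c.im • v, ?_⟩
    rw [← TensorProduct.smul_tmul, ← TensorProduct.smul_tmul, ← TensorProduct.add_tmul]
    congr 1
    apply Complex.ext <;> simp

/-- The complex bilinear extension of a real bilinear form. -/
noncomputable def complexForm (B : V →ₗ[ℝ] V →ₗ[ℝ] ℝ) :
    (ℂ ⊗[ℝ] V) →ₗ[ℂ] (ℂ ⊗[ℝ] V) →ₗ[ℂ] ℂ :=
  LinearMap.BilinForm.baseChange ℂ B

theorem complexForm_tmul (B : V →ₗ[ℝ] V →ₗ[ℝ] ℝ) (c d : ℂ) (x y : V) :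
    complexForm B (c ⊗ₜ x) (d ⊗ₜ y) = c * d * (B x y : ℂ) := by
  simp [complexForm, LinearMap.BilinForm.baseChange_tmul, mul_comm]

theorem complexForm_skew {B : V →ₗ[ℝ] V →ₗ[ℝ] ℝ} (hB : ∀ u w, B u w = - B w u)
    (u w : ℂ ⊗[ℝ] V) : complexForm B u w = - complexForm B w u := by
  obtain ⟨x, y, rfl⟩ := exists_re_im u
  obtain ⟨x', y', rfl⟩ := exists_re_im w
  simp only [map_add, LinearMap.add_apply, complexForm_tmul]
  rw [hB x x', hB x y', hB y x', hB y y']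
  push_cast
  ring

theorem complexForm_selfAdjoint {B : V →ₗ[ℝ] V →ₗ[ℝ] ℝ} {a : V →ₗ[ℝ] V}
    (ha : ∀ u w, B (a u) w = B u (a w)) (ρ : ℂ) (u w : ℂ ⊗[ℝ] V) :
    complexForm B ((a.baseChange ℂ - ρ • LinearMap.id : ℂ ⊗[ℝ] V →ₗ[ℂ] ℂ ⊗[ℝ] V) u) w =
      complexForm B u ((a.baseChange ℂ - ρ • LinearMap.id : ℂ ⊗[ℝ] V →ₗ[ℂ] ℂ ⊗[ℝ] V) w) := by
  obtain ⟨x, y, rfl⟩ := exists_re_im u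
  obtain ⟨x', y', rfl⟩ := exists_re_im w
  simp only [map_add, map_sub, map_smul, LinearMap.add_apply, LinearMap.sub_apply,
    LinearMap.smul_apply, LinearMap.id_apply, LinearMap.baseChange_tmul, complexForm_tmul, ha,
    smul_eq_mul]
  ring

/-- Pairing with real vectors separates real and imaginary parts. -/
theorem re_im_of_complexForm_eq_zero {B : V →ₗ[ℝ] V →ₗ[ℝ] ℝ} {x y v : V}
    (h : complexForm B ((1 : ℂ) ⊗ₜ[ℝ] x + Complex.I ⊗ₜ[ℝ] y) (1 ⊗ₜ[ℝ] v) = 0) :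
    B x v = 0 ∧ B y v = 0 := by
  simp only [map_add, LinearMap.add_apply, complexForm_tmul] at h
  have hre := congrArg Complex.re h
  have him := congrArg Complex.im h
  simp at hre him
  exact ⟨hre, him⟩

end Complexification


/-- Corollary 4: for a `g`-self-adjoint endomorphism `a` of a real vector space with
nondegenerate symmetric bilinear form `g`, and a multilinear `Z` skew in its first two
arguments with `Z(a u, v, ·, ·) + Z(a v, u, ·, ·) = 0`, if the complexification of `a`
has an eigenvalue of geometric multiplicity 1, then the kernel of `Z` contains a
vector `v` with `g(v,v) ≠ 0`. -/
theorem stmt_2 {V : Type*} [AddCommGroup V] [Module ℝ V] [FiniteDimensional ℝ V]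
    (hn : 1 ≤ Module.finrank ℝ V)
    (g : V →ₗ[ℝ] V →ₗ[ℝ] ℝ) (hgsymm : ∀ u w, g u w = g w u)
    (hgnd : ∀ v : V, (∀ w, g v w = 0) → v = 0)
    (a : V →ₗ[ℝ] V) (hsa : ∀ u w, g (a u) w = g u (a w))
    (Z : V →ₗ[ℝ] V →ₗ[ℝ] V →ₗ[ℝ] V →ₗ[ℝ] ℝ)
    (hZskew : ∀ u v x y, Z u v x y = - Z v u x y)
    (hZa : ∀ u v x y, Z (a u) v x y + Z (a v) u x y = 0)
    (ρ : ℂ)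
    (hmult : Module.finrank ℂ
      (LinearMap.ker (a.baseChange ℂ - ρ • (LinearMap.id : TensorProduct ℝ ℂ V →ₗ[ℂ] TensorProduct ℝ ℂ V))) = 1) :
    ∃ v : V, g v v ≠ 0 ∧ ∀ x y z, Z v x y z = 0 := by
  by_contra! hcon
  -- By polarization, since every vector of the kernel of `Z` is isotropic.
  have hK : ∀ v w : V, (∀ x y z, Z v x y z = 0) → (∀ x y z, Z w x y z = 0) → g v w = 0 := by
    have hiso : ∀ v : V, (∀ x y z, Z v x y z = 0) → g v v = 0 := by
      intro v hv
      by_contra hne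
      obtain ⟨x, y, z, h⟩ := hcon v hne
      exact h (hv x y z)
    intro v w hv hw
    have h := hiso (v + w) fun x y z => by simp [hv x y z, hw x y z]
    simp only [map_add, LinearMap.add_apply, hiso v hv, hiso w hw, hgsymm w v] at h
    linarith
  set N : ℂ ⊗[ℝ] V →ₗ[ℂ] ℂ ⊗[ℝ] V := a.baseChange ℂ - ρ • LinearMap.id
  obtain ⟨n, hc, hn0⟩ :=
    (N.eventually_isCompl_ker_pow_range_pow.and (Filter.eventually_ne_atTop 0)).exists
  have hgN : ∀ u w, complexForm g (N u) w = complexForm g u (N w) :=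
    complexForm_selfAdjoint hsa ρ
  have hker : ∀ x y : V, (N ^ n) ((1 : ℂ) ⊗ₜ[ℝ] x + Complex.I ⊗ₜ[ℝ] y) = 0 →
      (∀ p q r, Z x p q r = 0) ∧ (∀ p q r, Z y p q r = 0) := by
    intro x y hxy
    have key : ∀ p q r, Z x p q r = 0 ∧ Z y p q r = 0 := by
      intro p q r
      let B : V →ₗ[ℝ] V →ₗ[ℝ] ℝ :=
        LinearMap.mk₂ ℝ (fun u v => Z u v q r) (by simp) (by simp) (by simp) (by simp)
      have hBa : ∀ u w, B (a u) w = B u (a w) := by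
        intro u w
        change Z (a u) w q r = Z u (a w) q r
        linarith [hZa u w q r, hZskew u (a w) q r]
      exact re_im_of_complexForm_eq_zero (B := B) (skew_form_eq_zero hmult hn0 hc
        (complexForm_selfAdjoint hBa ρ) (complexForm_skew fun u w => hZskew u w q r) hxy _)
    exact ⟨fun p q r => (key p q r).1, fun p q r => (key p q r).2⟩
  obtain ⟨⟨e, heker⟩, hne, -⟩ := finrank_eq_one_iff'.mp hmult
  have heN : N e = 0 := heker
  have hen : (N ^ n) e = 0 := by
    obtain ⟨m, rfl⟩ := Nat.exists_eq_succ_of_ne_zero hn0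
    rw [Nat.succ_eq_add_one, pow_succ, Module.End.mul_apply, heN, map_zero]
  obtain ⟨x, y, rfl⟩ := exists_re_im e
  obtain ⟨hx, hy⟩ := hker x y hen
  have horth : ∀ w, complexForm g ((1 : ℂ) ⊗ₜ[ℝ] x + Complex.I ⊗ₜ[ℝ] y) w = 0 := by
    intro w
    have hmem : w ∈ LinearMap.ker (N ^ n) ⊔ LinearMap.range (N ^ n) := by
      rw [hc.sup_eq_top]; trivial
    obtain ⟨w₀, h0, _, ⟨z, rfl⟩, rfl⟩ := Submodule.mem_sup.mp hmem
    rw [map_add, ← selfAdjoint_pow hgN, hen, map_zero, LinearMap.zero_apply, add_zero]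
    obtain ⟨x', y', rfl⟩ := exists_re_im w₀
    obtain ⟨hx', hy'⟩ := hker x' y' h0
    simp [complexForm_tmul, hK x x' hx hx', hK x y' hx hy', hK y x' hy hx', hK y y' hy hy']
  have hx0 : x = 0 := hgnd x fun v => (re_im_of_complexForm_eq_zero (horth (1 ⊗ₜ v))).1
  have hy0 : y = 0 := hgnd y fun v => (re_im_of_complexForm_eq_zero (horth (1 ⊗ₜ v))).2
  apply hne
  ext
  simp [hx0, hy0]
end

section
/- Let V be a finite-dimensional real vector space of dimension n ≥ 1, let g be a nondegenerate symmetric bilinear form on V, and let a : V → V be a g-self-adjoint endomorphism. Let ρ ∈ ℂ be an eigenvalue of the complexification of a. Then there exists a real vector v ∈ V with g(v, v) ≠ 0 such that ((a² − 2·Re(ρ)·a + |ρ|²·id)ⁿ) v = 0; that is, the real generalized eigenspace of a associated to the conjugate pair {ρ, ρ̄} contains a vector that is non-null with respect to g. -/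
/-!
Write `P = a² − 2 Re(ρ) a + |ρ|²`, `n = dim V` and `K = ker Pⁿ`. A complex eigenvector of `a` for `ρ`
is killed by the complexification of `P`, so `P` is not injective and `K ≠ 0`. By Fitting's lemma
`V = K ⊕ range Pⁿ`, and since `P` is `g`-self-adjoint the two summands are `g`-orthogonal. If all
vectors of `K` were null, polarization would make `g` vanish on `K × K`; then `K` would be
orthogonal to all of `V`, contradicting nondegeneracy.
-/

/-- `a² − 2 Re(ρ) a + |ρ|²` is not injective, because its complexification
`(a − ρ)(a − ρ̄)` kills an eigenvector for `ρ`. -/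
lemma exists_ne_zero_quadratic_apply_eq_zero {V : Type*} [AddCommGroup V] [Module ℝ V]
    (a : V →ₗ[ℝ] V) (ρ : ℂ) (hρ : Module.End.HasEigenvalue (a.baseChange ℂ) ρ) :
    ∃ v : V, v ≠ 0 ∧
      (a * a - (2 * ρ.re) • a + Complex.normSq ρ • (LinearMap.id : V →ₗ[ℝ] V)) v = 0 := by
  by_contra! hcon
  set P := a * a - (2 * ρ.re) • a + Complex.normSq ρ • (LinearMap.id : V →ₗ[ℝ] V) with hP
  have hinj : Function.Injective P :=
    (injective_iff_map_eq_zero P).2 fun v hv => by_contra fun h => hcon v h hv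
  have hinjC : Function.Injective (P.baseChange ℂ) :=
    Module.Flat.lTensor_preserves_injective_linearMap (M := ℂ) P hinj
  obtain ⟨x, hx⟩ := hρ.exists_hasEigenvector
  have hax : a.baseChange ℂ x = ρ • x := hx.apply_eq_smul
  have hscal : ρ * ρ - ((2 * ρ.re : ℝ) : ℂ) * ρ + (Complex.normSq ρ : ℂ) = 0 := by
    apply Complex.ext <;> simp [Complex.normSq_apply] <;> ring
  have hsmul : ∀ (r : ℝ) (y : TensorProduct ℝ ℂ V), r • y = (r : ℂ) • y := fun r y =>
    (Complex.coe_smul r y).symm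
  have hPx : P.baseChange ℂ x = 0 := by
    have hexp : P.baseChange ℂ x = a.baseChange ℂ (a.baseChange ℂ x)
        - (2 * ρ.re) • a.baseChange ℂ x + Complex.normSq ρ • x := by
      simp [hP, LinearMap.baseChange_add, LinearMap.baseChange_sub, LinearMap.baseChange_smul,
        LinearMap.baseChange_mul]
    rw [hexp, hax, map_smul, hax, hsmul, hsmul, smul_smul, smul_smul, ← sub_smul, ← add_smul,
      hscal, zero_smul]
  exact hx.2 (hinjC (by rw [hPx, map_zero]))

/-- For a `g`-self-adjoint endomorphism `a` of a real vector space with nondegenerate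
symmetric bilinear form `g`, the real generalized eigenspace associated to a conjugate
pair of complex eigenvalues `{ρ, ρ̄}` contains a non-null vector. -/
theorem stmt_4 {V : Type*} [AddCommGroup V] [Module ℝ V] [FiniteDimensional ℝ V]
    (hn : 1 ≤ Module.finrank ℝ V)
    (g : V →ₗ[ℝ] V →ₗ[ℝ] ℝ) (hgsymm : ∀ u w, g u w = g w u)
    (hgnd : ∀ v : V, (∀ w, g v w = 0) → v = 0)
    (a : V →ₗ[ℝ] V) (hsa : ∀ u w, g (a u) w = g u (a w))
    (ρ : ℂ) (hρ : Module.End.HasEigenvalue (a.baseChange ℂ) ρ) :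
    ∃ v : V, g v v ≠ 0 ∧
      ((a * a - (2 * ρ.re) • a + Complex.normSq ρ • (LinearMap.id : V →ₗ[ℝ] V))
        ^ (Module.finrank ℝ V)) v = 0 := by
  set P := a * a - (2 * ρ.re) • a + Complex.normSq ρ • (LinearMap.id : V →ₗ[ℝ] V) with hP
  set n := Module.finrank ℝ V
  obtain ⟨k, hk0, hk⟩ := exists_ne_zero_quadratic_apply_eq_zero a ρ hρ
  have hPsa : ∀ u w, g (P u) w = g u (P w) := by
    intro u w
    simp [hP, hsa]
  have hPpow : ∀ (m : ℕ) (u w : V), g ((P ^ m) u) w = g u ((P ^ m) w) := by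
    intro m
    induction m with
    | zero => intro u w; rfl
    | succ m ih =>
      intro u w
      rw [pow_succ, Module.End.mul_apply, ih, hPsa, ← Module.End.mul_apply, ← pow_succ', pow_succ]
  by_contra! hcon
  have hnull : ∀ v : V, (P ^ n) v = 0 → g v v = 0 := fun v hv =>
    by_contra fun h => hcon v h hv
  have hkn : (P ^ n) k = 0 := by
    obtain ⟨m, hm⟩ : ∃ m, n = m + 1 := ⟨n - 1, by omega⟩
    rw [hm, pow_succ, Module.End.mul_apply]
    simp [hP, hk]
  refine hk0 (hgnd k fun w => ?_)
  -- Fitting's lemma gives the splitting for some `m ≥ n`; the kernel is already stable at `n`.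
  obtain ⟨m, hcompl, hnm⟩ :=
    ((LinearMap.eventually_isCompl_ker_pow_range_pow P).and (Filter.eventually_ge_atTop n)).exists
  obtain ⟨u, hu, y, ⟨z, rfl⟩, rfl⟩ := Submodule.mem_sup.1
    (hcompl.sup_eq_top ▸ Submodule.mem_top : w ∈ LinearMap.ker (P ^ m) ⊔ LinearMap.range (P ^ m))
  have hun : (P ^ n) u = 0 := by
    rw [Module.End.ker_pow_eq_ker_pow_finrank_of_le hnm] at hu
    exact hu
  have hkm : (P ^ m) k = 0 := by
    rw [← LinearMap.mem_ker, Module.End.ker_pow_eq_ker_pow_finrank_of_le hnm]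
    exact hkn
  have hku : g k u = 0 := by
    have h := hnull (k + u) (by rw [map_add, hkn, hun, add_zero])
    simp only [map_add, LinearMap.add_apply, hnull k hkn, hnull u hun, hgsymm u k] at h
    linarith
  rw [map_add, hku, ← hPpow, hkm, map_zero, LinearMap.zero_apply, add_zero]
end

section
/- Let k ≥ 0 be a real number and let φ : ℝ → ℝ be three times differentiable and satisfy the ordinary differential equation φ'''(t) = 4k·φ'(t) + 6·φ'(t)·φ''(t) − 4·(φ'(t))³ for all t ∈ ℝ. Define τ : ℝ → ℝ by τ(t) = ∫₀ᵗ exp(2φ(s)) ds. If τ is surjective onto ℝ (equivalently, τ is unbounded above and below), then φ is constant. -/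
/-!
The substitution `p = exp (-2φ)` linearizes the equation: `p''' = 4k p'`, while `τ' = 1 / p`.
Since `p > 0` and `τ` is unbounded in both directions, `p''` can be eventually bounded away from
zero neither at `+∞` nor at `-∞`: eventually `p'' ≤ -c < 0` makes `p` negative, and eventually
`p'' ≥ c > 0` makes `p` grow at least quadratically, so that `∫ 1 / p` converges
(`not_eventually_le_neg`, `not_eventually_ge`).

For `k = 0` the function `p''` is constant, hence zero, so `p` is affine and positive, hence
constant. For `k = m² / 4` with `m > 0`, the combinations `p'' ± m p'` are multiples of
`exp (± m t)`. A nonzero multiple of the growing exponential would force `|p''| → ∞` at `+∞`, so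
`p'' + m p' = 0` (`growing_mode_eq_zero`). The same statement for `t ↦ p (-t)` gives
`p'' - m p' = 0`, and therefore `p' = 0`.
-/

open Filter Set

lemma le_of_hasDerivAt_nonneg {f f' : ℝ → ℝ} {T : ℝ} (hf : ∀ t, T ≤ t → HasDerivAt f (f' t) t)
    (h : ∀ t, T ≤ t → 0 ≤ f' t) {t : ℝ} (ht : T ≤ t) : f T ≤ f t := by
  have hm : MonotoneOn f (Ici T) := by
    apply monotoneOn_of_deriv_nonneg (convex_Ici T)
    · exact fun x hx => (hf x hx).continuousAt.continuousWithinAt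
    · intro x hx
      rw [interior_Ici] at hx
      exact (hf x (le_of_lt hx)).differentiableAt.differentiableWithinAt
    · intro x hx
      rw [interior_Ici] at hx
      rw [(hf x (le_of_lt hx)).deriv]
      exact h x (le_of_lt hx)
  exact hm self_mem_Ici ht ht

lemma quadratic_lower_bound {p u s : ℝ → ℝ} (hp : ∀ t, HasDerivAt p (u t) t)
    (hu : ∀ t, HasDerivAt u (s t) t) {c T : ℝ} (hs : ∀ t, T ≤ t → c ≤ s t) {t : ℝ} (ht : T ≤ t) :
    p T + u T * (t - T) + c / 2 * (t - T) ^ 2 ≤ p t := by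
  have hu' : ∀ t, T ≤ t → u T + c * (t - T) ≤ u t := by
    intro t ht
    have := le_of_hasDerivAt_nonneg (f := fun t => u t - c * (t - T)) (f' := fun t => s t - c * 1)
      (fun t _ => (hu t).sub (((hasDerivAt_id t).sub_const T).const_mul c))
      (fun t h => by linarith [hs t h]) ht
    simp only [sub_self] at this
    linarith
  have := le_of_hasDerivAt_nonneg
    (f := fun t => p t - (u T * (t - T) + c / 2 * (t - T) ^ 2))
    (f' := fun t => u t - (u T + c * (t - T)))
    (fun t _ => by
      have h := ((hasDerivAt_id t).sub_const T)
      refine HasDerivAt.congr_deriv ((hp t).sub ((h.const_mul (u T)).add ((h.pow 2).const_mul (c / 2)))) ?_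
      simp
      ring)
    (fun t h => by linarith [hu' t h]) ht
  simp only [sub_self] at this
  linarith

lemma not_eventually_le_neg {p u s : ℝ → ℝ} (hp : ∀ t, HasDerivAt p (u t) t)
    (hu : ∀ t, HasDerivAt u (s t) t) (hpos : ∀ t, 0 < p t) {c : ℝ} (hc : 0 < c)
    (hs : ∀ᶠ t in atTop, s t ≤ -c) : False := by
  obtain ⟨T, hT⟩ := eventually_atTop.1 hs
  have hq := fun t (ht : T ≤ t) => quadratic_lower_bound (c := c) (T := T)
    (fun t => (hp t).neg) (fun t => (hu t).neg)
    (fun t h => by have := hT t h; linarith) ht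
  -- The length of the interval is chosen so that `p T + |u T| x - c / 2 * x ^ 2 < 0`.
  set x := 1 + 2 * (p T + |u T|) / c with hx
  have hcx : c * x = c + 2 * (p T + |u T|) := by rw [hx]; field_simp
  have hx1 : 1 ≤ x := by
    have := hpos T
    have := abs_nonneg (u T)
    rw [hx]
    have : 0 ≤ 2 * (p T + |u T|) / c := by positivity
    linarith
  have h := hq (T + x) (by linarith)
  simp only [Pi.neg_apply, add_sub_cancel_left] at h
  have h0 := hpos (T + x)
  have h4 : u T * x ≤ |u T| * x := mul_le_mul_of_nonneg_right (le_abs_self _) (by linarith)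
  have h5 : p T ≤ p T * x := le_mul_of_one_le_right (hpos T).le hx1
  have h6 : c / 2 * x ^ 2 = (c / 2 + (p T + |u T|)) * x := by
    rw [pow_two, ← mul_assoc]
    congr 1
    linarith
  have h7 : 0 < c / 2 * x := by positivity
  nlinarith

lemma not_eventually_ge {p u s τ : ℝ → ℝ} (hp : ∀ t, HasDerivAt p (u t) t)
    (hu : ∀ t, HasDerivAt u (s t) t) (hpos : ∀ t, 0 < p t)
    (hτ : ∀ t, HasDerivAt τ (1 / p t) t) (hunb : ∀ M, ∃ t, M < τ t) {c : ℝ} (hc : 0 < c)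
    (hs : ∀ᶠ t in atTop, c ≤ s t) : False := by
  obtain ⟨T, hT⟩ := eventually_atTop.1 hs
  have hq := fun t (ht : T ≤ t) => quadratic_lower_bound hp hu hT ht
  set X := 1 + 4 * |u T| / c with hX
  have hX1 : 1 ≤ X := by
    rw [hX]
    have : 0 ≤ 4 * |u T| / c := by positivity
    linarith
  have hcX : c * X = c + 4 * |u T| := by rw [hX]; field_simp
  have hlow : ∀ t, T + X ≤ t → c / 4 * (t - T) ^ 2 ≤ p t := by
    intro t ht
    have h := hq t (by linarith)
    have h0 := hpos T
    have h1 : c * X ≤ c * (t - T) := mul_le_mul_of_nonneg_left (by linarith) hc.le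
    have h2 := neg_abs_le (u T)
    have h3 : 0 ≤ (u T + c / 4 * (t - T)) * (t - T) :=
      mul_nonneg (by linarith) (by linarith)
    nlinarith
  -- `τ + (4 / c) / (t - T)` is nonincreasing, which bounds `τ` from above.
  have hbd : ∀ t, T + X ≤ t → τ t ≤ τ (T + X) + 4 / c * X⁻¹ := by
    intro t ht
    have := le_of_hasDerivAt_nonneg (T := T + X)
      (f := fun t => -(τ t + 4 / c * (t - T)⁻¹))
      (f' := fun t => -(1 / p t + 4 / c * (-1 / (t - T) ^ 2)))
      (fun t ht => ((hτ t).add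
        ((((hasDerivAt_id t).sub_const T).inv (by simp only [id]; linarith)).const_mul
          (4 / c))).neg)
      (fun t ht => by
        have hx : 0 < t - T := by linarith
        have h1 : 1 / p t ≤ 1 / (c / 4 * (t - T) ^ 2) :=
          one_div_le_one_div_of_le (by positivity) (hlow t ht)
        have h2 : 1 / (c / 4 * (t - T) ^ 2) = -(4 / c * (-1 / (t - T) ^ 2)) := by
          field_simp
        linarith) ht
    simp only [add_sub_cancel_left] at this
    have h3 : 0 ≤ 4 / c * (t - T)⁻¹ := by
      have hx : 0 < t - T := by linarith
      positivity
    linarith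
  obtain ⟨t, ht⟩ := hunb (τ (T + X) + 4 / c * X⁻¹)
  rcases le_total (T + X) t with h | h
  · linarith [hbd t h]
  · have h4 := le_of_hasDerivAt_nonneg (fun t _ => hτ t)
      (fun t _ => (one_div_pos.2 (hpos t)).le) h
    have : 0 ≤ 4 / c * X⁻¹ := by positivity
    linarith

lemma eq_mul_exp {v : ℝ → ℝ} {m : ℝ} (hv : ∀ t, HasDerivAt v (m * v t) t) (t : ℝ) :
    v t = v 0 * Real.exp (m * t) := by
  have hd : ∀ t, HasDerivAt (fun t => v t * Real.exp (-(m * t))) 0 t := by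
    intro t
    have he : HasDerivAt (fun t => Real.exp (-(m * t))) (Real.exp (-(m * t)) * -(m * 1)) t :=
      (((hasDerivAt_id t).const_mul m).neg).exp
    refine HasDerivAt.congr_deriv ((hv t).mul he) ?_
    ring
  have h := is_const_of_deriv_eq_zero (fun t => (hd t).differentiableAt) (fun t => (hd t).deriv) t 0
  simp only [mul_zero, neg_zero, Real.exp_zero, mul_one] at h
  rw [← h, mul_assoc, ← Real.exp_add]
  simp

/-- If `p''' = m² p'` with `m > 0`, the growing exponential `exp (m t)` does not occur in `p`. -/
lemma growing_mode_eq_zero {p u s τ : ℝ → ℝ} {m : ℝ} (hm : 0 < m)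
    (hp : ∀ t, HasDerivAt p (u t) t) (hu : ∀ t, HasDerivAt u (s t) t)
    (hs : ∀ t, HasDerivAt s (m ^ 2 * u t) t) (hpos : ∀ t, 0 < p t)
    (hτ : ∀ t, HasDerivAt τ (1 / p t) t) (hunb : ∀ M, ∃ t, M < τ t) (t : ℝ) :
    s t + m * u t = 0 := by
  have hv := eq_mul_exp (v := fun t => s t + m * u t) (m := m) (fun t => by
    refine HasDerivAt.congr_deriv ((hs t).add ((hu t).const_mul m)) ?_
    ring)
  have hw := eq_mul_exp (v := fun t => s t - m * u t) (m := -m) (fun t => by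
    refine HasDerivAt.congr_deriv ((hs t).sub ((hu t).const_mul m)) ?_
    ring)
  set a := s 0 + m * u 0
  set b := s 0 - m * u 0
  have hst : s = fun t => a * Real.exp (m * t) / 2 + b * Real.exp (-m * t) / 2 := by
    funext t
    linarith [hv t, hw t]
  have hmt : Tendsto (fun t : ℝ => m * t) atTop atTop := tendsto_id.const_mul_atTop hm
  have hE : Tendsto (fun t => Real.exp (m * t)) atTop atTop := Real.tendsto_exp_atTop.comp hmt
  have hD : Tendsto (fun t => b * Real.exp (-m * t) / 2) atTop (nhds (b * 0 / 2)) := by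
    have : Tendsto (fun t => Real.exp (-m * t)) atTop (nhds 0) := by
      refine (Real.tendsto_exp_neg_atTop_nhds_zero.comp hmt).congr fun t => ?_
      simp
    exact (this.const_mul b).div_const 2
  rcases lt_trichotomy a 0 with ha | ha | ha
  · exfalso
    have hlim : Tendsto s atTop atBot := by
      rw [hst]
      exact ((hE.const_mul_atTop_of_neg ha).atBot_div_const two_pos).atBot_add hD
    exact not_eventually_le_neg hp hu hpos one_pos (hlim.eventually_le_atBot (-1))
  · rw [hv t, ha, zero_mul]
  · exfalso
    have hlim : Tendsto s atTop atTop := by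
      rw [hst]
      exact ((hE.const_mul_atTop ha).atTop_div_const two_pos).atTop_add hD
    exact not_eventually_ge hp hu hpos hτ hunb one_pos (hlim.eventually_ge_atTop 1)

lemma hasDerivAt_comp_neg {f f' : ℝ → ℝ} (hf : ∀ t, HasDerivAt f (f' t) t) (t : ℝ) :
    HasDerivAt (fun t => f (-t)) (-f' (-t)) t := by
  refine HasDerivAt.congr_deriv ((hf (-t)).comp t (hasDerivAt_neg t)) ?_
  ring

/-- A positive solution of `p''' = 4k p'`, `k ≥ 0`, is constant if a primitive of `1 / p` is
onto. -/
lemma deriv_eq_zero {k : ℝ} (hk : 0 ≤ k) {p u s τ : ℝ → ℝ}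
    (hp : ∀ t, HasDerivAt p (u t) t) (hu : ∀ t, HasDerivAt u (s t) t)
    (hs : ∀ t, HasDerivAt s (4 * k * u t) t) (hpos : ∀ t, 0 < p t)
    (hτ : ∀ t, HasDerivAt τ (1 / p t) t) (hsurj : Function.Surjective τ) (t : ℝ) :
    u t = 0 := by
  have hunb : ∀ M, ∃ t, M < τ t := fun M => by
    obtain ⟨t, ht⟩ := hsurj (M + 1)
    exact ⟨t, by linarith⟩
  -- Time reversal sends `p, p', p'', τ` at `t` to `p, -p', p'', -τ` at `-t`.
  have hp' := hasDerivAt_comp_neg hp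
  have hu' : ∀ t, HasDerivAt (fun t => -u (-t)) (s (-t)) t := fun t => by
    simpa using (hasDerivAt_comp_neg hu t).fun_neg
  rcases hk.eq_or_lt with rfl | hk
  · have hsc : ∀ t, s t = s 0 := fun t =>
      is_const_of_deriv_eq_zero (fun t => (hs t).differentiableAt)
        (fun t => by rw [(hs t).deriv]; ring) t 0
    have hs0 : s 0 = 0 := by
      rcases lt_trichotomy (s 0) 0 with h | h | h
      · exact (not_eventually_le_neg hp hu hpos (neg_pos.2 h)
          (Eventually.of_forall fun t => by rw [hsc t, neg_neg])).elim
      · exact h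
      · exact (not_eventually_ge hp hu hpos hτ hunb h
          (Eventually.of_forall fun t => (hsc t).ge)).elim
    have huc : ∀ x, u x = u t := fun x =>
      is_const_of_deriv_eq_zero (fun t => (hu t).differentiableAt)
        (fun t => by rw [(hu t).deriv, hsc, hs0]) x t
    have hd : ∀ x, HasDerivAt (fun x => p x - u t * x) 0 x := fun x => by
      refine HasDerivAt.congr_deriv ((hp x).sub ((hasDerivAt_id x).const_mul (u t))) ?_
      rw [huc x]; ring
    have hlin : ∀ x, p x = p 0 + u t * x := fun x => by
      have := is_const_of_deriv_eq_zero (fun t => (hd t).differentiableAt)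
        (fun t => (hd t).deriv) x 0
      simp only [mul_zero, sub_zero] at this
      linarith
    by_contra hne
    -- A nonconstant affine function has a zero.
    have h := hlin (-p 0 / u t)
    rw [mul_div_cancel₀ _ hne] at h
    linarith [hpos (-p 0 / u t)]
  · have hm : 0 < 2 * √k := by positivity
    have hm2 : (2 * √k) ^ 2 = 4 * k := by
      rw [mul_pow, Real.sq_sqrt hk.le]; norm_num
    have hA := growing_mode_eq_zero hm hp hu (by rwa [hm2]) hpos hτ hunb t
    have hB := growing_mode_eq_zero (τ := fun t => -τ (-t)) hm hp' hu'
      (fun t => by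
        rw [hm2]
        simpa using hasDerivAt_comp_neg hs t)
      (fun t => hpos (-t))
      (fun t => by simpa using (hasDerivAt_comp_neg hτ t).fun_neg)
      (fun M => by
        obtain ⟨t, ht⟩ := hsurj (-M - 1)
        exact ⟨-t, by rw [neg_neg, ht]; linarith⟩) (-t)
    simp only [neg_neg] at hB
    have : 2 * √k * u t = 0 := by linarith
    exact (mul_eq_zero.1 this).resolve_left (ne_of_gt hm)


/-- Analytic core of Theorem 1: if `φ` solves `φ''' = 4k φ' + 6 φ' φ'' − 4 (φ')³`
with `k ≥ 0`, and the reparametrization `τ(t) = ∫₀ᵗ e^{2φ}` is onto `ℝ`,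
then `φ` is constant. -/
theorem stmt_7 (k : ℝ) (hk : 0 ≤ k) (φ : ℝ → ℝ)
    (h1 : Differentiable ℝ φ) (h2 : Differentiable ℝ (deriv φ))
    (h3 : Differentiable ℝ (deriv (deriv φ)))
    (hode : ∀ t, deriv (deriv (deriv φ)) t =
      4 * k * deriv φ t + 6 * deriv φ t * deriv (deriv φ) t - 4 * (deriv φ t) ^ 3)
    (τ : ℝ → ℝ) (hτ : ∀ t, τ t = ∫ s in (0:ℝ)..t, Real.exp (2 * φ s))
    (hsurj : Function.Surjective τ) :
    ∀ s t, φ s = φ t := by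
  have d1 : ∀ t, HasDerivAt φ (deriv φ t) t := fun t => (h1 t).hasDerivAt
  have d2 : ∀ t, HasDerivAt (deriv φ) (deriv (deriv φ) t) t := fun t => (h2 t).hasDerivAt
  have d3 : ∀ t, HasDerivAt (deriv (deriv φ)) (deriv (deriv (deriv φ)) t) t :=
    fun t => (h3 t).hasDerivAt
  have hp : ∀ t, HasDerivAt (fun t => Real.exp (-2 * φ t))
      (-2 * deriv φ t * Real.exp (-2 * φ t)) t := fun t => by
    refine HasDerivAt.congr_deriv (((d1 t).const_mul (-2)).exp) ?_
    ring
  have hu : ∀ t, HasDerivAt (fun t => -2 * deriv φ t * Real.exp (-2 * φ t))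
      ((-2 * deriv (deriv φ) t + 4 * deriv φ t ^ 2) * Real.exp (-2 * φ t)) t := fun t => by
    refine HasDerivAt.congr_deriv (((d2 t).const_mul (-2)).mul (hp t)) ?_
    ring
  have hs : ∀ t, HasDerivAt
      (fun t => (-2 * deriv (deriv φ) t + 4 * deriv φ t ^ 2) * Real.exp (-2 * φ t))
      (4 * k * (-2 * deriv φ t * Real.exp (-2 * φ t))) t := fun t => by
    refine HasDerivAt.congr_deriv ((((d3 t).const_mul (-2)).add (((d2 t).pow 2).const_mul 4)).mul (hp t)) ?_
    rw [hode t]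
    simp
    ring
  have hτ' : ∀ t, HasDerivAt τ (1 / Real.exp (-2 * φ t)) t := fun t => by
    have hc : Continuous fun s => Real.exp (2 * φ s) :=
      Real.continuous_exp.comp (continuous_const.mul h1.continuous)
    rw [funext hτ]
    refine HasDerivAt.congr_deriv (hc.integral_hasStrictDerivAt 0 t |>.hasDerivAt) ?_
    rw [one_div, ← Real.exp_neg]
    ring_nf
  have hz := deriv_eq_zero hk hp hu hs (fun t => Real.exp_pos _) hτ' hsurj
  refine is_const_of_deriv_eq_zero h1 fun t => ?_
  simpa [(Real.exp_pos _).ne'] using hz t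
end

section
/- Let c > 0 and let C, C₊, C₋ be real numbers such that p(t) := C + C₊·exp(c·t) + C₋·exp(−c·t) is strictly positive for every t ∈ ℝ. Define τ : ℝ → ℝ by τ(t) = ∫₀ᵗ 1/p(s) ds. If τ is surjective onto ℝ (equivalently, unbounded above and below), then C₊ = 0 and C₋ = 0, i.e. p is the constant C > 0. -/
/-!
If `C₊ ≠ 0`, then `p(t) e^{-ct} → C₊ ≠ 0` as `t → ∞`, so `1 / p = O(e^{-ct})` is integrable on
`(0, ∞)` and `τ` is bounded above by `max 0 (∫_{(0,∞)} 1/p)`; this is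
`coeff_eq_zero_of_unbounded`. The claim for `C₋` is the same lemma after the reflection
`t ↦ -t`, which swaps `C₊` with `C₋` and upper with lower bounds of `τ`.
-/

open MeasureTheory Filter Topology Asymptotics

/-- Only one end matters: if `∫₀ᵗ 1/p` is unbounded above, the coefficient of the exponential
growing at `+∞` vanishes. -/
lemma coeff_eq_zero_of_unbounded (c : ℝ) (hc : 0 < c) (C Cp Cm : ℝ)
    (hpos : ∀ t : ℝ, 0 < C + Cp * Real.exp (c * t) + Cm * Real.exp (-c * t))
    (hunb : ∀ B : ℝ, ∃ t : ℝ, B < ∫ s in (0:ℝ)..t,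
      1 / (C + Cp * Real.exp (c * s) + Cm * Real.exp (-c * s))) :
    Cp = 0 := by
  by_contra hCp
  set p : ℝ → ℝ := fun t => C + Cp * Real.exp (c * t) + Cm * Real.exp (-c * t) with hp
  have hcont : Continuous fun s => 1 / p s :=
    continuous_const.div (by fun_prop) fun t => (hpos t).ne'
  have hexp : Tendsto (fun t : ℝ => Real.exp (-c * t)) atTop (𝓝 0) :=
    Real.tendsto_exp_atBot.comp (tendsto_id.const_mul_atTop_of_neg (neg_lt_zero.2 hc))
  have hlim : Tendsto (fun t => p t * Real.exp (-c * t)) atTop (𝓝 Cp) := by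
    have h : Tendsto (fun t : ℝ => C * Real.exp (-c * t) + Cp
        + Cm * (Real.exp (-c * t) * Real.exp (-c * t))) atTop
        (𝓝 (C * 0 + Cp + Cm * (0 * 0))) :=
      ((hexp.const_mul C).add_const Cp).add ((hexp.mul hexp).const_mul Cm)
    have h0 : C * 0 + Cp + Cm * (0 * 0) = Cp := by ring
    rw [h0] at h
    refine h.congr fun t => ?_
    have he : Real.exp (c * t) * Real.exp (-c * t) = 1 := by
      rw [← Real.exp_add]; simp
    simp only [hp]
    linear_combination (-Cp) * he
  have hO : (fun s => 1 / p s) =O[atTop] fun s => Real.exp (-c * s) := by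
    have h1 : (fun t => (p t * Real.exp (-c * t))⁻¹) =O[atTop] fun _ => (1 : ℝ) :=
      (hlim.inv₀ hCp).isBigO_one ℝ
    have h2 := h1.mul (isBigO_refl (fun t : ℝ => Real.exp (-c * t)) atTop)
    refine h2.congr (fun t => ?_) fun t => one_mul _
    change (p t * Real.exp (-c * t))⁻¹ * Real.exp (-c * t) = 1 / p t
    have : p t ≠ 0 := (hpos t).ne'
    field_simp
  have hint : IntegrableOn (fun s => 1 / p s) (Set.Ioi 0) :=
    integrable_of_isBigO_exp_neg hc hcont.continuousOn hO
  have hnn : ∀ s, 0 ≤ 1 / p s := fun s => one_div_nonneg.2 (hpos s).le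
  obtain ⟨t, ht⟩ := hunb (max 0 (∫ s in Set.Ioi 0, 1 / p s))
  refine absurd ht (not_lt.2 ?_)
  rcases le_total 0 t with h | h
  · refine le_max_of_le_right ?_
    rw [intervalIntegral.integral_of_le h]
    exact setIntegral_mono_set hint (Eventually.of_forall hnn)
      (Set.Ioc_subset_Ioi_self.eventuallyLE)
  · refine le_max_of_le_left ?_
    rw [intervalIntegral.integral_symm]
    exact neg_nonpos.2 (intervalIntegral.integral_nonneg h fun s _ => hnn s)

/-- Case `K·g(γ̇,γ̇) > 0` of the completeness argument: if
`p(t) = C + C₊ e^{ct} + C₋ e^{−ct}` is everywhere positive and `τ(t) = ∫₀ᵗ 1/p` is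
onto `ℝ`, then the exponential terms vanish. -/
theorem stmt_11 (c : ℝ) (hc : 0 < c) (C Cp Cm : ℝ)
    (hpos : ∀ t : ℝ, 0 < C + Cp * Real.exp (c * t) + Cm * Real.exp (-c * t))
    (τ : ℝ → ℝ)
    (hτ : ∀ t, τ t = ∫ s in (0:ℝ)..t,
      1 / (C + Cp * Real.exp (c * s) + Cm * Real.exp (-c * s)))
    (hsurj : Function.Surjective τ) :
    Cp = 0 ∧ Cm = 0 := by
  have hrefl : ∀ t : ℝ, C + Cm * Real.exp (c * t) + Cp * Real.exp (-c * t)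
      = C + Cp * Real.exp (c * -t) + Cm * Real.exp (-c * -t) := fun t => by
    rw [neg_mul_neg, mul_neg, neg_mul]; ring
  constructor
  · refine coeff_eq_zero_of_unbounded c hc C Cp Cm hpos fun B => ?_
    obtain ⟨t, ht⟩ := hsurj (B + 1)
    exact ⟨t, by rw [← hτ, ht]; linarith⟩
  · refine coeff_eq_zero_of_unbounded c hc C Cm Cp (fun t => hrefl t ▸ hpos (-t)) fun B => ?_
    obtain ⟨t, ht⟩ := hsurj (-(B + 1))
    refine ⟨-t, ?_⟩
    simp only [hrefl]
    rw [intervalIntegral.integral_comp_neg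
      (fun s => 1 / (C + Cp * Real.exp (c * s) + Cm * Real.exp (-c * s))),
      neg_neg, neg_zero, intervalIntegral.integral_symm, ← hτ, ht]
    linarith
end
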